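/- arXiv:1810.12415 — 4 statements merged into one kernel-verified Lean document; each statement's English description precedes it below -/
import Mathlib

section
/- 𝔏(ℚ⁺) is a proper subset of 𝔏(SL(2,ℚ)): every language recognized by a ℚ⁺-automaton is recognized by an SL(2,ℚ)-automaton (via s ↦ diag(s, 1/s)), and the language { a^{2^{2n+1}} : n ≥ 0 } is recognized by an SL(2,ℚ)-automaton but by no ℚ⁺-automaton. -/
/-- A `G`-automaton over input alphabet `α`: a nondeterministic finite automaton
equipped with a register holding an element of the group `G`. -/
structure GAutomaton (α : Type*) (G : Type*) [Group G] where
  /-- the (finite) state set -/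
  Q : Type
  finQ : Finite Q
  /-- the initial state -/
  q0 : Q
  /-- the accepting states -/
  acc : Set Q
  /-- the (finite) transition relation; `none` stands for ε -/
  δ : Set (Q × Option α × Q × G)
  finδ : δ.Finite

namespace GAutomaton

variable {α : Type*} {G : Type*} [Group G]

/-- One computation step between configurations `(state, register, remaining input)`. -/
def Step (M : GAutomaton α G) (c c' : M.Q × G × List α) : Prop :=
  ∃ σ m, (c.1, σ, c'.1, m) ∈ M.δ ∧ c'.2.1 = c.2.1 * m ∧
    match σ with
    | none => c'.2.2 = c.2.2
    | some s => c.2.2 = s :: c'.2.2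

/-- `M.StepsIn k c c'` : configuration `c'` is reachable from `c` in exactly `k` steps. -/
def StepsIn (M : GAutomaton α G) : ℕ → (M.Q × G × List α) → (M.Q × G × List α) → Prop
  | 0, c, c' => c = c'
  | n + 1, c, c' => ∃ d, M.Step c d ∧ M.StepsIn n d c'

/-- `M` accepts the word `w` within `t` computation steps. -/
def AcceptsIn (M : GAutomaton α G) (w : List α) (t : ℕ) : Prop :=
  ∃ k ≤ t, ∃ q ∈ M.acc, M.StepsIn k (M.q0, 1, w) (q, 1, [])

/-- The language recognized by `M`. -/
def lang (M : GAutomaton α G) : Language α := {w | ∃ t, M.AcceptsIn w t}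

/-- `M` is real-time if every transition consumes an input symbol. -/
def RealTime (M : GAutomaton α G) : Prop := ∀ tr ∈ M.δ, tr.2.1 ≠ none

end GAutomaton

/-- `L ∈ 𝔏(G)` : the language `L` is recognized by some `G`-automaton. -/
def GRecognizable (G : Type*) [Group G] {α : Type*} (L : Language α) : Prop :=
  ∃ M : GAutomaton α G, M.lang = L

/-- `L ∈ 𝔏(G)ʷ_{t(n)}` : `L` is recognized by a weakly `t(n)` time-bounded `G`-automaton. -/
def GRecognizableInTime (G : Type*) [Group G] {α : Type*} (L : Language α) (t : ℕ → ℕ) : Prop :=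
  ∃ M : GAutomaton α G, M.lang = L ∧ ∀ w ∈ L, M.AcceptsIn w (t w.length)

/-- `L ∈ 𝔏(G)ʷ_{O(n)}` : `L` is recognized by a weakly linear-time bounded `G`-automaton. -/
def GRecognizableLinTime (G : Type*) [Group G] {α : Type*} (L : Language α) : Prop :=
  ∃ C : ℕ, GRecognizableInTime G L (fun n => C * n + C)

/-- The unary language `{ a^(2^(2n+1)) : n ≥ 0 }`. -/
def LoddPow : Language (Fin 1) :=
  {w | ∃ n : ℕ, w = List.replicate (2 ^ (2 * n + 1)) 0}

namespace GAutomaton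

variable {α : Type*} {G H : Type*} [Group G] [Group H]

/-- The automaton obtained by applying a group homomorphism to every register update. -/
abbrev mapRegister (M : GAutomaton α G) (f : G →* H) : GAutomaton α H where
  Q := M.Q
  finQ := M.finQ
  q0 := M.q0
  acc := M.acc
  δ := (fun t => (t.1, t.2.1, t.2.2.1, f t.2.2.2)) '' M.δ
  finδ := M.finδ.image _

theorem step_mapRegister_iff (M : GAutomaton α G) (f : G →* H) (p : M.Q) (g : G) (w : List α)
    (c : M.Q × H × List α) :
    (M.mapRegister f).Step (p, f g, w) c ↔ ∃ h, c.2.1 = f h ∧ M.Step (p, g, w) (c.1, h, c.2.2) := by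
  obtain ⟨q, x, u⟩ := c
  constructor
  · rintro ⟨σ, m, ⟨⟨a, b, c, d⟩, ht, heq⟩, hx, hw⟩
    obtain ⟨rfl, rfl, rfl, rfl⟩ : a = p ∧ b = σ ∧ c = q ∧ f d = m := by simpa using heq
    exact ⟨g * d, by simpa using hx, b, d, ht, rfl, hw⟩
  · rintro ⟨h, hx, σ, m, ht, hm, hw⟩
    refine ⟨σ, f m, ⟨_, ht, rfl⟩, ?_, hw⟩
    simp only at hx hm ⊢
    rw [hx, hm, map_mul]

theorem stepsIn_mapRegister_iff (M : GAutomaton α G) (f : G →* H) (k : ℕ) :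
    ∀ (p : M.Q) (g : G) (w : List α) (c : M.Q × H × List α),
      (M.mapRegister f).StepsIn k (p, f g, w) c ↔
        ∃ h, c.2.1 = f h ∧ M.StepsIn k (p, g, w) (c.1, h, c.2.2) := by
  induction k with
  | zero =>
    rintro p g w ⟨q, x, u⟩
    simp only [StepsIn, Prod.mk.injEq]
    constructor
    · rintro ⟨rfl, rfl, rfl⟩
      exact ⟨g, rfl, rfl, rfl, rfl⟩
    · rintro ⟨h, rfl, rfl, rfl, rfl⟩
      exact ⟨rfl, rfl, rfl⟩
  | succ k ih =>
    intro p g w c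
    constructor
    · rintro ⟨⟨q, x, u⟩, hd, hs⟩
      obtain ⟨h, rfl, hst⟩ := (M.step_mapRegister_iff f p g w _).1 hd
      obtain ⟨h', hh', hst'⟩ := (ih q h u c).1 hs
      exact ⟨h', hh', _, hst, hst'⟩
    · rintro ⟨h', hh', ⟨q, h, u⟩, hst, hst'⟩
      exact ⟨(q, f h, u), (M.step_mapRegister_iff f p g w _).2 ⟨h, rfl, hst⟩,
        (ih q h u c).2 ⟨h', hh', hst'⟩⟩

theorem lang_mapRegister (M : GAutomaton α G) (f : G →* H) (hf : Function.Injective f) :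
    (M.mapRegister f).lang = M.lang := by
  have key : ∀ (w : List α) (k : ℕ) (q : M.Q),
      (M.mapRegister f).StepsIn k (M.q0, 1, w) (q, 1, []) ↔
        M.StepsIn k (M.q0, 1, w) (q, 1, []) := by
    intro w k q
    have h := M.stepsIn_mapRegister_iff f k M.q0 1 w (q, 1, [])
    rw [map_one] at h
    rw [h]
    constructor
    · rintro ⟨x, hx, hs⟩
      obtain rfl : 1 = x := hf ((map_one f).trans hx)
      exact hs
    · exact fun hs => ⟨1, (map_one f).symm, hs⟩
  ext w
  exact exists_congr fun t => exists_congr fun k => and_congr_right fun _ =>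
    exists_congr fun q => and_congr_right fun _ => key w k q

/-- `M.IsRun p l q`: the list `l` of transitions is a walk from `p` to `q`. -/
def IsRun (M : GAutomaton α G) : M.Q → List (M.Q × Option α × M.Q × G) → M.Q → Prop
  | p, [], q => p = q
  | p, t :: l, q => t ∈ M.δ ∧ t.1 = p ∧ M.IsRun t.2.2.1 l q

theorem IsRun.append {M : GAutomaton α G} {l₁ l₂ : List (M.Q × Option α × M.Q × G)} :
    ∀ {p q r : M.Q}, M.IsRun p l₁ q → M.IsRun q l₂ r → M.IsRun p (l₁ ++ l₂) r := by
  induction l₁ with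
  | nil =>
    rintro p q r rfl h
    exact h
  | cons t l ih =>
    rintro p q r ⟨ht, hp, hl⟩ h
    exact ⟨ht, hp, ih hl h⟩

theorem IsRun.replicate {M : GAutomaton α G} {t : M.Q × Option α × M.Q × G} (ht : t ∈ M.δ)
    (hloop : t.2.2.1 = t.1) (n : ℕ) : M.IsRun t.1 (List.replicate n t) t.1 := by
  induction n with
  | zero => rfl
  | succ n ih => exact ⟨ht, rfl, hloop.symm ▸ ih⟩

theorem IsRun.mem {M : GAutomaton α G} {l : List (M.Q × Option α × M.Q × G)} :
    ∀ {p q : M.Q}, M.IsRun p l q → ∀ t ∈ l, t ∈ M.δ := by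
  induction l with
  | nil => simp
  | cons t l ih =>
    rintro p q ⟨ht, -, hl⟩ s hs
    rcases List.mem_cons.1 hs with rfl | hs
    · exact ht
    · exact ih hl s hs

theorem exists_stepsIn_iff_exists_isRun (M : GAutomaton α G) (p q : M.Q) (g h : G) (w : List α) :
    (∃ k, M.StepsIn k (p, g, w) (q, h, [])) ↔
      ∃ l, M.IsRun p l q ∧ h = g * (l.map fun t => t.2.2.2).prod ∧
        l.filterMap (fun t => t.2.1) = w := by
  constructor
  · rintro ⟨k, hk⟩
    induction k generalizing p g w with
    | zero =>
      simp only [StepsIn, Prod.mk.injEq] at hk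
      obtain ⟨rfl, rfl, rfl⟩ := hk
      exact ⟨[], rfl, by simp, rfl⟩
    | succ k ih =>
      obtain ⟨⟨p', g', w'⟩, ⟨σ, m, ht, hg, hw⟩, hs⟩ := hk
      obtain ⟨l, hl, hh, hlw⟩ := ih _ _ _ hs
      refine ⟨(p, σ, p', m) :: l, ⟨ht, rfl, hl⟩, ?_, ?_⟩
      · simp only at hg
        simp [hh, hg, mul_assoc]
      · cases σ <;> simp_all
  · rintro ⟨l, hl, hh, hw⟩
    induction l generalizing p g w with
    | nil =>
      obtain rfl : p = q := hl
      exact ⟨0, by simp_all [StepsIn]⟩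
    | cons t l ih =>
      obtain ⟨ht, rfl, hl⟩ := hl
      obtain ⟨a, σ, b, m⟩ := t
      obtain ⟨k, hk⟩ := ih b (g * m) (l.filterMap fun t => t.2.1) hl
        (by simpa [mul_assoc] using hh) rfl
      refine ⟨k + 1, _, ⟨σ, m, ht, rfl, ?_⟩, hk⟩
      cases σ <;> simp_all

theorem mem_lang_iff (M : GAutomaton α G) (w : List α) :
    w ∈ M.lang ↔ ∃ q ∈ M.acc, ∃ l, M.IsRun M.q0 l q ∧
      (l.map fun t => t.2.2.2).prod = 1 ∧ l.filterMap (fun t => t.2.1) = w := by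
  have h := fun q => M.exists_stepsIn_iff_exists_isRun M.q0 q 1 1 w
  simp only [one_mul, @eq_comm G 1] at h
  constructor
  · rintro ⟨t, k, -, q, hq, hk⟩
    exact ⟨q, hq, (h q).1 ⟨k, hk⟩⟩
  · rintro ⟨q, hq, hl⟩
    obtain ⟨k, hk⟩ := (h q).2 hl
    exact ⟨k, k, le_rfl, q, hq, hk⟩

/-- If a run `l₁` is a sublist of a parallel run `u ++ l₂`, with the embedding skipping `u`, then
the segments of `u ++ l₂` outside `l₁` are closed walks and can be traversed twice. -/
theorem IsRun.exists_pump {M : GAutomaton α G} {l₁ l₂ : List (M.Q × Option α × M.Q × G)}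
    (hsub : l₁.Sublist l₂) :
    ∀ {p p' q : M.Q} {u : List (M.Q × Option α × M.Q × G)},
      M.IsRun p l₁ q → M.IsRun p u p' → M.IsRun p' l₂ q →
        ∃ l₃, M.IsRun p l₃ q ∧ (l₃ ++ l₁).Perm ((u ++ l₂) ++ (u ++ l₂)) := by
  induction hsub with
  | slnil =>
    rintro p p' q u rfl hu rfl
    exact ⟨u ++ u, hu.append hu, by simp⟩
  | cons t _ ih =>
    rintro p p' q u h₁ hu ⟨ht, hp, h₂⟩
    obtain ⟨l₃, h₃, hperm⟩ := ih h₁ (hu.append (l₂ := [t]) ⟨ht, hp, rfl⟩) h₂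
    exact ⟨l₃, h₃, by simpa using hperm⟩
  | @cons_cons l₁ l₂ t _ ih =>
    rintro p p' q u ⟨ht, rfl, h₁⟩ hu ⟨-, rfl, h₂⟩
    obtain ⟨l₃, h₃, hperm⟩ := ih (u := []) h₁ rfl h₂
    refine ⟨u ++ (u ++ t :: l₃), hu.append (hu.append ⟨ht, rfl, h₃⟩), ?_⟩
    classical
    rw [List.perm_iff_count] at hperm ⊢
    intro s
    have := hperm s
    simp only [List.count_append, List.count_cons, List.nil_append] at this ⊢
    omega

/-- A pumping lemma for automata over commutative groups. -/
theorem exists_length_add_length_eq_two_mul {G : Type*} [CommGroup G] (M : GAutomaton α G)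
    (w : ℕ → List α) (hw : ∀ n, w n ∈ M.lang) :
    ∃ i j, i < j ∧ ∃ v ∈ M.lang, v.length + (w i).length = 2 * (w j).length := by
  simp only [mem_lang_iff] at hw
  choose q hq l hl hprod hlab using hw
  have hpwo := Set.PartiallyWellOrderedOn.partiallyWellOrderedOn_sublistForall₂ (· = ·)
    (M.finδ.partiallyWellOrderedOn (r := (· = ·)))
  have : IsPreorder (List (M.Q × Option α × M.Q × G)) (List.SublistForall₂ (· = ·)) := {}
  obtain ⟨φ, hφ⟩ := hpwo.exists_monotone_subseq (f := l) fun n => (hl n).mem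
  have := M.finQ
  obtain ⟨a, b, hab, hqab⟩ := Finite.exists_ne_map_eq_of_infinite (q ∘ φ)
  wlog hlt : a < b generalizing a b
  · exact this b a hab.symm hqab.symm (lt_of_le_of_ne (not_lt.1 hlt) hab.symm)
  have hsub : (l (φ a)).Sublist (l (φ b)) := by
    simpa [List.sublistForall₂_iff] using hφ a b hlt.le
  have hrun := hl (φ b)
  rw [← show q (φ a) = q (φ b) from hqab] at hrun
  obtain ⟨l₃, h₃, hperm⟩ := IsRun.exists_pump hsub (u := []) (hl (φ a)) rfl hrun
  refine ⟨φ a, φ b, φ.strictMono hlt, _,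
    (M.mem_lang_iff _).2 ⟨q (φ a), hq _, l₃, h₃, ?_, rfl⟩, ?_⟩
  · have h := (hperm.map fun t => t.2.2.2).prod_eq
    simpa [hprod] using h
  · have h := (hperm.filterMap fun t => t.2.1).length_eq
    simp only [List.nil_append, List.filterMap_append, List.length_append, hlab] at h
    omega

end GAutomaton

theorem GRecognizable.of_injective {α G H : Type*} [Group G] [Group H] {L : Language α}
    (h : GRecognizable G L) (f : G →* H) (hf : Function.Injective f) : GRecognizable H L := by
  obtain ⟨M, rfl⟩ := h
  exact ⟨M.mapRegister f, M.lang_mapRegister f hf⟩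

theorem not_gRecognizable_LoddPow (G : Type*) [CommGroup G] : ¬ GRecognizable G LoddPow := by
  rintro ⟨M, hM⟩
  obtain ⟨i, j, hij, v, ⟨n, rfl⟩, hlen⟩ : ∃ i j, i < j ∧ ∃ v ∈ LoddPow,
      v.length + (List.replicate (2 ^ (2 * i + 1)) (0 : Fin 1)).length =
        2 * (List.replicate (2 ^ (2 * j + 1)) (0 : Fin 1)).length := by
    rw [← hM]
    exact M.exists_length_add_length_eq_two_mul _ fun n => hM ▸ ⟨n, rfl⟩
  simp only [List.length_replicate] at hlen
  have hpos : 0 < 2 ^ (2 * i + 1) := by positivity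
  have hij' : 2 ^ (2 * i + 1) < 2 ^ (2 * j + 1) := Nat.pow_lt_pow_right (by norm_num) (by omega)
  have h₁ : 2 ^ (2 * j + 1) < 2 ^ (2 * n + 1) := by omega
  have h₂ : 2 ^ (2 * n + 1) < 2 ^ (2 * j + 2) := by
    rw [pow_succ 2 (2 * j + 1)]
    omega
  have h₃ := (Nat.pow_lt_pow_iff_right (by norm_num)).1 h₁
  have h₄ := (Nat.pow_lt_pow_iff_right (by norm_num)).1 h₂
  omega

/-- The matrix `diag(s, 1/s)`. -/
def diagSL (s : {q : ℚ // 0 < q}) : Matrix.SpecialLinearGroup (Fin 2) ℚ :=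
  ⟨!![s.1, 0; 0, s.1⁻¹], by simp [Matrix.det_fin_two_of, s.2.ne']⟩

/-- The embedding `s ↦ diag(s, 1/s)` of the positive rationals into `SL(2,ℚ)`. -/
def diagHom : {q : ℚ // 0 < q} →* Matrix.SpecialLinearGroup (Fin 2) ℚ where
  toFun := diagSL
  map_one' := by
    ext i j
    fin_cases i <;> fin_cases j <;> simp [diagSL]
  map_mul' s t := by
    ext i j
    rw [Matrix.SpecialLinearGroup.coe_mul]
    fin_cases i <;> fin_cases j <;> simp [diagSL, mul_comm]

theorem diagHom_injective : Function.Injective diagHom := by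
  intro s t h
  have := congrArg (fun A : Matrix.SpecialLinearGroup (Fin 2) ℚ => A.1 0 0) h
  exact Subtype.ext (this)

/-- The matrix `diag(2, 1/2)`. -/
def diagTwo : Matrix.SpecialLinearGroup (Fin 2) ℚ :=
  ⟨!![2, 0; 0, 1 / 2], by norm_num [Matrix.det_fin_two_of]⟩

/-- The upper unitriangular matrix with off-diagonal entry `x`. -/
def unitri (x : ℚ) : Matrix.SpecialLinearGroup (Fin 2) ℚ :=
  ⟨!![1, x; 0, 1], by simp [Matrix.det_fin_two_of]⟩

theorem coe_diagTwo_pow (n : ℕ) :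
    ((diagTwo ^ n : Matrix.SpecialLinearGroup (Fin 2) ℚ) : Matrix (Fin 2) (Fin 2) ℚ) =
      !![2 ^ n, 0; 0, (1 / 2) ^ n] := by
  induction n with
  | zero => ext i j; fin_cases i <;> fin_cases j <;> simp
  | succ n ih =>
    rw [pow_succ, Matrix.SpecialLinearGroup.coe_mul, ih, diagTwo]
    ext i j
    fin_cases i <;> fin_cases j <;> simp [pow_succ]

theorem coe_unitri_pow (x : ℚ) (n : ℕ) :
    ((unitri x ^ n : Matrix.SpecialLinearGroup (Fin 2) ℚ) : Matrix (Fin 2) (Fin 2) ℚ) =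
      !![1, n * x; 0, 1] := by
  induction n with
  | zero => ext i j; fin_cases i <;> fin_cases j <;> simp
  | succ n ih =>
    rw [pow_succ, Matrix.SpecialLinearGroup.coe_mul, ih, unitri]
    ext i j
    fin_cases i <;> fin_cases j <;> simp
    ring

theorem diagTwo_pow_mul_eq_one_iff (n m k : ℕ) :
    diagTwo ^ n * unitri 2 * diagTwo⁻¹ ^ m * unitri (-1) ^ k = 1 ↔
      n = m ∧ k = 2 ^ (2 * n + 1) := by
  have hcomm : diagTwo ^ n * unitri 2 * diagTwo⁻¹ ^ m * unitri (-1) ^ k = 1 ↔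
      diagTwo ^ n * unitri 2 = unitri 1 ^ k * diagTwo ^ m := by
    have hinv : unitri (-1) = (unitri 1)⁻¹ := by
      rw [eq_inv_iff_mul_eq_one]
      ext i j
      rw [Matrix.SpecialLinearGroup.coe_mul]
      fin_cases i <;> fin_cases j <;> simp [unitri]
    rw [hinv, inv_pow, inv_pow, mul_inv_eq_one, mul_inv_eq_iff_eq_mul]
  rw [hcomm, Matrix.SpecialLinearGroup.ext_iff, Matrix.SpecialLinearGroup.coe_mul,
    Matrix.SpecialLinearGroup.coe_mul, coe_diagTwo_pow, coe_diagTwo_pow, coe_unitri_pow, unitri]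
  simp only [Fin.forall_fin_two, Matrix.mul_fin_two, Matrix.of_apply, Matrix.cons_val_zero,
    Matrix.cons_val_one, Matrix.cons_val', Matrix.cons_val_fin_one, mul_one, mul_zero, zero_mul,
    one_mul, add_zero, zero_add, true_and]
  constructor
  · rintro ⟨⟨h₀₀, h₀₁⟩, -⟩
    obtain rfl : n = m := pow_right_injective₀ (by norm_num : (0 : ℚ) < 2) (by norm_num) h₀₀
    refine ⟨rfl, ?_⟩
    have hk : (k : ℚ) = 2 ^ (2 * n + 1) := by
      rw [one_div, inv_pow, ← div_eq_mul_inv, eq_div_iff (by positivity)] at h₀₁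
      rw [← h₀₁]
      ring
    exact_mod_cast hk
  · rintro ⟨rfl, rfl⟩
    refine ⟨⟨rfl, ?_⟩, rfl⟩
    push_cast
    rw [one_div, inv_pow, ← div_eq_mul_inv, eq_div_iff (by positivity)]
    ring

/-- An automaton whose accepting runs compute `D ^ n * U(2) * D⁻¹ ^ m * U(-1) ^ k` for
`D = diag(2, 1/2)`, where `k` is the length of the input. -/
abbrev oddPowAutomaton : GAutomaton (Fin 1) (Matrix.SpecialLinearGroup (Fin 2) ℚ) where
  Q := Fin 3
  finQ := inferInstance
  q0 := 0
  acc := {2}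
  δ := {(0, none, 0, diagTwo), (0, none, 1, unitri 2), (1, none, 1, diagTwo⁻¹),
    (1, none, 2, 1), (2, some 0, 2, unitri (-1))}
  finδ := by simp

theorem oddPowAutomaton_run_from_two
    {l : List (Fin 3 × Option (Fin 1) × Fin 3 × Matrix.SpecialLinearGroup (Fin 2) ℚ)}
    (hl : oddPowAutomaton.IsRun (2 : Fin 3) l (2 : Fin 3)) :
    ∃ k, (l.map fun t => t.2.2.2).prod = unitri (-1) ^ k ∧
      l.filterMap (fun t => t.2.1) = List.replicate k 0 := by
  induction l with
  | nil => exact ⟨0, by simp, by simp⟩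
  | cons t l ih =>
    obtain ⟨rfl | rfl | rfl | rfl | rfl, hp, h⟩ := hl
    · simp at hp
    · simp at hp
    · simp at hp
    · simp at hp
    · obtain ⟨k, hk, hw⟩ := ih h
      exact ⟨k + 1, by simp [hk, pow_succ'], by simp [hw, List.replicate_succ]⟩

theorem oddPowAutomaton_run_from_one
    {l : List (Fin 3 × Option (Fin 1) × Fin 3 × Matrix.SpecialLinearGroup (Fin 2) ℚ)}
    (hl : oddPowAutomaton.IsRun (1 : Fin 3) l (2 : Fin 3)) :
    ∃ m k, (l.map fun t => t.2.2.2).prod = diagTwo⁻¹ ^ m * unitri (-1) ^ k ∧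
      l.filterMap (fun t => t.2.1) = List.replicate k 0 := by
  induction l with
  | nil => exact absurd (show (1 : Fin 3) = 2 from hl) (by decide)
  | cons t l ih =>
    obtain ⟨rfl | rfl | rfl | rfl | rfl, hp, h⟩ := hl
    · simp at hp
    · simp at hp
    · obtain ⟨m, k, hk, hw⟩ := ih h
      refine ⟨m + 1, k, ?_, by simp [hw]⟩
      rw [List.map_cons, List.prod_cons, hk, pow_succ', mul_assoc]
    · obtain ⟨k, hk, hw⟩ := oddPowAutomaton_run_from_two h
      exact ⟨0, k, by simp [hk], by simp [hw]⟩
    · simp at hp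

theorem oddPowAutomaton_run_from_zero
    {l : List (Fin 3 × Option (Fin 1) × Fin 3 × Matrix.SpecialLinearGroup (Fin 2) ℚ)}
    (hl : oddPowAutomaton.IsRun (0 : Fin 3) l (2 : Fin 3)) :
    ∃ n m k, (l.map fun t => t.2.2.2).prod =
        diagTwo ^ n * unitri 2 * diagTwo⁻¹ ^ m * unitri (-1) ^ k ∧
      l.filterMap (fun t => t.2.1) = List.replicate k 0 := by
  induction l with
  | nil => exact absurd (show (0 : Fin 3) = 2 from hl) (by decide)
  | cons t l ih =>
    obtain ⟨rfl | rfl | rfl | rfl | rfl, hp, h⟩ := hl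
    · obtain ⟨n, m, k, hk, hw⟩ := ih h
      refine ⟨n + 1, m, k, ?_, by simp [hw]⟩
      rw [List.map_cons, List.prod_cons, hk, pow_succ']
      simp only [mul_assoc]
    · obtain ⟨m, k, hk, hw⟩ := oddPowAutomaton_run_from_one h
      refine ⟨0, m, k, ?_, by simp [hw]⟩
      rw [List.map_cons, List.prod_cons, hk, pow_zero, one_mul, mul_assoc]
    · simp at hp
    · simp at hp
    · simp at hp

theorem exists_oddPowAutomaton_run (n m k : ℕ) :
    ∃ l, oddPowAutomaton.IsRun (0 : Fin 3) l (2 : Fin 3) ∧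
      (l.map fun t => t.2.2.2).prod =
        diagTwo ^ n * unitri 2 * diagTwo⁻¹ ^ m * unitri (-1) ^ k ∧
      l.filterMap (fun t => t.2.1) = List.replicate k 0 := by
  have h₀ : oddPowAutomaton.IsRun (0 : Fin 3)
      (List.replicate n (0, none, 0, diagTwo) ++ [(0, none, 1, unitri 2)]) (1 : Fin 3) :=
    (GAutomaton.IsRun.replicate (M := oddPowAutomaton) (t := (0, none, 0, diagTwo))
      (by simp) rfl n).append ⟨by simp, rfl, rfl⟩
  have h₁ : oddPowAutomaton.IsRun (1 : Fin 3)
      (List.replicate m (1, none, 1, diagTwo⁻¹) ++ [(1, none, 2, 1)]) (2 : Fin 3) :=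
    (GAutomaton.IsRun.replicate (M := oddPowAutomaton) (t := (1, none, 1, diagTwo⁻¹))
      (by simp) rfl m).append ⟨by simp, rfl, rfl⟩
  have h₂ : oddPowAutomaton.IsRun (2 : Fin 3)
      (List.replicate k (2, some 0, 2, unitri (-1))) (2 : Fin 3) :=
    GAutomaton.IsRun.replicate (M := oddPowAutomaton) (t := (2, some 0, 2, unitri (-1)))
      (by simp) rfl k
  refine ⟨_, (h₀.append h₁).append h₂, ?_, ?_⟩
  · simp [mul_assoc]
  · simp

theorem lang_oddPowAutomaton : oddPowAutomaton.lang = LoddPow := by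
  ext w
  rw [GAutomaton.mem_lang_iff]
  constructor
  · rintro ⟨q, rfl, l, hl, hprod, rfl⟩
    obtain ⟨n, m, k, hk, hw⟩ := oddPowAutomaton_run_from_zero hl
    obtain ⟨-, rfl⟩ := (diagTwo_pow_mul_eq_one_iff n m k).1 (hk.symm.trans hprod)
    exact ⟨n, hw⟩
  · rintro ⟨n, rfl⟩
    obtain ⟨l, hl, hprod, hw⟩ := exists_oddPowAutomaton_run n n (2 ^ (2 * n + 1))
    exact ⟨_, rfl, l, hl, hprod.trans ((diagTwo_pow_mul_eq_one_iff _ _ _).2 ⟨rfl, rfl⟩), hw⟩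

theorem gRecognizable_LoddPow :
    GRecognizable (Matrix.SpecialLinearGroup (Fin 2) ℚ) LoddPow :=
  ⟨oddPowAutomaton, lang_oddPowAutomaton⟩

/-- `𝔏(ℚ⁺) ⊊ 𝔏(SL(2,ℚ))`, where `ℚ⁺ = {q : ℚ // 0 < q}` is the
multiplicative group of positive rationals. -/
theorem Qpos_lt_SL2Q :
    (∀ (α : Type) [Fintype α] (L : Language α),
      GRecognizable {q : ℚ // 0 < q} L →
        GRecognizable (Matrix.SpecialLinearGroup (Fin 2) ℚ) L) ∧
    GRecognizable (Matrix.SpecialLinearGroup (Fin 2) ℚ) LoddPow ∧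
    ¬ GRecognizable {q : ℚ // 0 < q} LoddPow :=
  ⟨fun _ _ _ h => h.of_injective diagHom diagHom_injective, gRecognizable_LoddPow,
    not_gRecognizable_LoddPow _⟩
end

section
/- Let G_BS be the subgroup of GL(2,ℚ) generated by the matrices A = [[1,0],[-1,1]] and B = [[1/2,0],[0,1]] (this group satisfies B·A·B⁻¹ = A² and is isomorphic to the Baumslag–Solitar group BS(1,2)). The unary language UPOW = { a^{2^n} : n ≥ 0 } is recognized by a G_BS-automaton; since UPOW is not context-free, 𝔏(G_BS) is not contained in the class CF of context-free languages. -/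
/-- The matrix `A = [[1,0],[-1,1]]` as an element of `GL(2,ℚ)`. -/
noncomputable def BSmatA : GL (Fin 2) ℚ :=
  Matrix.GeneralLinearGroup.mkOfDetNeZero !![1, 0; -1, 1]
    (by simp [Matrix.det_fin_two_of])

/-- The matrix `B = [[1/2,0],[0,1]]` as an element of `GL(2,ℚ)`. -/
noncomputable def BSmatB : GL (Fin 2) ℚ :=
  Matrix.GeneralLinearGroup.mkOfDetNeZero !![1/2, 0; 0, 1]
    (by norm_num [Matrix.det_fin_two_of])

/-- `G_BS`, the subgroup of `GL(2,ℚ)` generated by `A` and `B`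
(isomorphic to the Baumslag–Solitar group `BS(1,2)`). -/
noncomputable def GBS : Subgroup (GL (Fin 2) ℚ) := Subgroup.closure {BSmatA, BSmatB}

/-- The unary language `UPOW = { a^(2^n) : n ≥ 0 }`. -/
def UPOW : Language (Fin 1) := {w | ∃ n : ℕ, w = List.replicate (2 ^ n) 0}

namespace ContextFreeGrammar

variable {T : Type*} {g : ContextFreeGrammar T}

/-- `g.Yields F s n`: the sentential form `s` derives a terminal word of length `n`, through
derivation trees all of whose inner nodes are labelled by nonterminals in `F`. -/
inductive Yields (g : ContextFreeGrammar T) (F : Finset g.NT) :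
    List (Symbol T g.NT) → ℕ → Prop
  | nil : Yields g F [] 0
  | terminal (t : T) {s : List (Symbol T g.NT)} {n : ℕ} (hs : Yields g F s n) :
      Yields g F (.terminal t :: s) (n + 1)
  | nonterminal {r : ContextFreeRule T g.NT} (hr : r ∈ g.rules) (hF : r.input ∈ F)
      {s : List (Symbol T g.NT)} {m n : ℕ} (ho : Yields g F r.output m) (hs : Yields g F s n) :
      Yields g F (.nonterminal r.input :: s) (m + n)

/-- `g.Reaches s A c`: the sentential form `s` derives a form consisting of the nonterminal `A`
surrounded by `c` terminals. -/
def Reaches (g : ContextFreeGrammar T) (s : List (Symbol T g.NT)) (A : g.NT) (c : ℕ) : Prop :=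
  ∃ u v : List T, u.length + v.length = c ∧
    g.Derives s (u.map .terminal ++ [.nonterminal A] ++ v.map .terminal)

lemma derives_of_mem_rules {r : ContextFreeRule T g.NT} (hr : r ∈ g.rules) :
    g.Derives [.nonterminal r.input] r.output :=
  Produces.single ⟨r, hr, ContextFreeRule.Rewrites.input_output⟩

lemma Derives.append {s s' t t' : List (Symbol T g.NT)} (hs : g.Derives s s')
    (ht : g.Derives t t') : g.Derives (s ++ t) (s' ++ t') :=
  (hs.append_right t).trans (ht.append_left s')

lemma Yields.exists_derives {F : Finset g.NT} {s : List (Symbol T g.NT)} {n : ℕ}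
    (h : g.Yields F s n) : ∃ w : List T, w.length = n ∧ g.Derives s (w.map .terminal) := by
  induction h with
  | nil => exact ⟨[], rfl, Derives.refl _⟩
  | terminal t _ ih =>
    obtain ⟨w, rfl, hw⟩ := ih
    exact ⟨t :: w, rfl, hw.append_left [.terminal t]⟩
  | nonterminal hr _ _ _ ih₁ ih₂ =>
    obtain ⟨w₁, rfl, hw₁⟩ := ih₁
    obtain ⟨w₂, rfl, hw₂⟩ := ih₂
    refine ⟨w₁ ++ w₂, by simp, ?_⟩
    simpa using ((derives_of_mem_rules hr).trans hw₁).append hw₂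

lemma yields_map_terminal (F : Finset g.NT) (w : List T) :
    g.Yields F (w.map .terminal) w.length := by
  induction w with
  | nil => exact .nil
  | cons t w ih => exact ih.terminal t

lemma Yields.append {F : Finset g.NT} {s t : List (Symbol T g.NT)} {m n : ℕ}
    (hs : g.Yields F s m) (ht : g.Yields F t n) : g.Yields F (s ++ t) (m + n) := by
  induction hs with
  | nil => simpa using ht
  | terminal a _ ih => simpa [add_right_comm] using ih.terminal a
  | nonterminal hr hF ho _ _ ih => simpa [add_assoc] using Yields.nonterminal hr hF ho ih

lemma Yields.exists_of_append {F : Finset g.NT} {s t : List (Symbol T g.NT)} {n : ℕ}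
    (h : g.Yields F (s ++ t) n) :
    ∃ m k, m + k = n ∧ g.Yields F s m ∧ g.Yields F t k := by
  induction s generalizing n with
  | nil => exact ⟨0, n, by simp, .nil, h⟩
  | cons x s ih =>
    cases h with
    | terminal a hs =>
      obtain ⟨m, k, rfl, hm, hk⟩ := ih hs
      exact ⟨m + 1, k, by omega, hm.terminal a, hk⟩
    | nonterminal hr hF ho hs =>
      obtain ⟨m, k, rfl, hm, hk⟩ := ih hs
      exact ⟨_, k, by rw [add_assoc], .nonterminal hr hF ho hm, hk⟩

lemma Reaches.of_derives {s t : List (Symbol T g.NT)} {A : g.NT} {c : ℕ} (hst : g.Derives s t)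
    (h : g.Reaches t A c) : g.Reaches s A c := by
  obtain ⟨u, v, huv, h⟩ := h
  exact ⟨u, v, huv, hst.trans h⟩

lemma reaches_self (A : g.NT) : g.Reaches [.nonterminal A] A 0 :=
  ⟨[], [], rfl, Derives.refl _⟩

lemma Reaches.append_yields {F : Finset g.NT} {s t : List (Symbol T g.NT)} {A : g.NT} {c n : ℕ}
    (hs : g.Reaches s A c) (ht : g.Yields F t n) : g.Reaches (s ++ t) A (c + n) := by
  obtain ⟨u, v, rfl, hs⟩ := hs
  obtain ⟨w, rfl, hw⟩ := ht.exists_derives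
  exact ⟨u, v ++ w, by simp [add_assoc], by simpa using hs.append hw⟩

lemma Yields.append_reaches {F : Finset g.NT} {s t : List (Symbol T g.NT)} {A : g.NT} {c n : ℕ}
    (hs : g.Yields F s n) (ht : g.Reaches t A c) : g.Reaches (s ++ t) A (n + c) := by
  obtain ⟨u, v, rfl, ht⟩ := ht
  obtain ⟨w, rfl, hw⟩ := hs.exists_derives
  exact ⟨w ++ u, v, by simp [add_assoc], by simpa using hw.append ht⟩

lemma Reaches.trans {s : List (Symbol T g.NT)} {A B : g.NT} {c d : ℕ}
    (h₁ : g.Reaches s A c) (h₂ : g.Reaches [.nonterminal A] B d) : g.Reaches s B (c + d) := by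
  obtain ⟨u, v, rfl, h₁⟩ := h₁
  refine .of_derives h₁ ?_
  convert ((yields_map_terminal ∅ u).append_reaches h₂).append_yields
    (yields_map_terminal ∅ v) using 1
  omega

lemma Reaches.iterate {A : g.NT} {c : ℕ} (h : g.Reaches [.nonterminal A] A c) (k : ℕ) :
    g.Reaches [.nonterminal A] A (k * c) := by
  induction k with
  | zero => simpa using reaches_self A
  | succ k ih => simpa [add_mul] using ih.trans h

/-- A derivation tree which uses `A` contains a subtree which uses `A` only at its root. -/
lemma Yields.erase_or_reaches [DecidableEq g.NT] {F : Finset g.NT} {s : List (Symbol T g.NT)}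
    {n : ℕ} (A : g.NT) (h : g.Yields F s n) :
    g.Yields (F.erase A) s n ∨ ∃ r ∈ g.rules, r.input = A ∧ ∃ m c, n = m + c ∧
      g.Yields (F.erase A) r.output m ∧ g.Reaches s A c := by
  induction h with
  | nil => exact .inl .nil
  | terminal t _ ih =>
    rcases ih with ih | ⟨r, hr, hA, m, c, rfl, ho, hc⟩
    · exact .inl (ih.terminal t)
    · refine .inr ⟨r, hr, hA, m, 1 + c, by omega, ho, ?_⟩
      exact (yields_map_terminal ∅ [t]).append_reaches hc
  | @nonterminal r hr hF s m n ho hs ih₁ ih₂ =>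
    rcases ih₁ with ih₁ | ⟨r', hr', hA, m', c, rfl, ho', hc⟩
    · by_cases hA : r.input = A
      · refine .inr ⟨r, hr, hA, m, 0 + n, by omega, ih₁, ?_⟩
        rw [hA]
        exact (reaches_self A).append_yields hs
      · have hF' : r.input ∈ F.erase A := Finset.mem_erase.2 ⟨hA, hF⟩
        rcases ih₂ with ih₂ | ⟨r', hr', hA', m', c, rfl, ho', hc⟩
        · exact .inl (.nonterminal hr hF' ih₁ ih₂)
        · refine .inr ⟨r', hr', hA', m', m + c, by omega, ho', ?_⟩
          exact .of_derives ((derives_of_mem_rules hr).append_right s) (ho.append_reaches hc)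
    · refine .inr ⟨r', hr', hA, m', c + n, by omega, ho', ?_⟩
      exact .of_derives ((derives_of_mem_rules hr).append_right s) (hc.append_yields hs)

lemma finite_yields_of_forall_singleton {F : Finset g.NT}
    (hF : ∀ A, {n | g.Yields F [.nonterminal A] n}.Finite) (s : List (Symbol T g.NT)) :
    {n | g.Yields F s n}.Finite := by
  induction s with
  | nil =>
    refine (Set.finite_singleton 0).subset ?_
    rintro n ⟨⟩
    rfl
  | cons x s ih =>
    have hx : {n | g.Yields F [x] n}.Finite := by
      cases x with
      | nonterminal A => exact hF A
      | terminal t =>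
        refine (Set.finite_singleton 1).subset ?_
        rintro n (_ | ⟨_, ⟨⟩⟩)
        rfl
    refine (Set.Finite.image2 (· + ·) hx ih).subset fun n hn => ?_
    obtain ⟨m, k, hmk, hm, hk⟩ := Yields.exists_of_append (s := [x]) hn
    exact ⟨m, hm, k, hk, hmk⟩

lemma finite_yields {F : Finset g.NT}
    (hF : ∀ A ∈ F, ∀ c, g.Reaches [.nonterminal A] A c → c = 0) (s : List (Symbol T g.NT)) :
    {n | g.Yields F s n}.Finite := by
  classical
  induction F using Finset.strongInduction generalizing s with
  | H F ih =>
    refine finite_yields_of_forall_singleton (fun A => ?_) s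
    by_cases hA : A ∈ F
    · have hfin := ih (F.erase A) (Finset.erase_ssubset hA)
        fun B hB => hF B (Finset.mem_of_mem_erase hB)
      refine ((hfin [.nonterminal A]).union
        (g.rules.finite_toSet.biUnion fun r _ => hfin r.output)).subset fun n hn => ?_
      rcases Yields.erase_or_reaches A hn with h | ⟨r, hr, -, m, c, rfl, hm, hc⟩
      · exact .inl h
      · obtain rfl := hF A hA c hc
        exact .inr (Set.mem_biUnion hr hm)
    · refine Set.finite_empty.subset ?_
      rintro n (_ | _ | ⟨-, h, -, -⟩)
      exact hA h

/-- Every nonterminal used in a successful derivation is accessible and productive. -/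
lemma yields_of_derives {F : Finset g.NT}
    (hF : ∀ r ∈ g.rules, (∃ c, g.Reaches [.nonterminal g.initial] r.input c) →
      (∃ w : List T, g.Derives [.nonterminal r.input] (w.map .terminal)) → r.input ∈ F)
    {s : List (Symbol T g.NT)} (hs : g.Derives [.nonterminal g.initial] s) {w : List T}
    (h : g.Derives s (w.map .terminal)) : g.Yields F s w.length := by
  induction h using Relation.ReflTransGen.head_induction_on with
  | refl => exact yields_map_terminal F w
  | head hst _ ih =>
    have ih := ih (hs.trans_produces hst)
    obtain ⟨r, hr, hrw⟩ := hst
    obtain ⟨p, q, rfl, rfl⟩ := hrw.exists_parts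
    obtain ⟨_, l, hl, hpo, hq⟩ := ih.exists_of_append
    obtain ⟨k, m, rfl, hp, ho⟩ := hpo.exists_of_append
    have hreach := (hp.append_reaches (reaches_self r.input)).append_yields hq
    obtain ⟨v, -, hv⟩ := ho.exists_derives
    have hin := hF r hr ⟨_, .of_derives hs hreach⟩ ⟨v, (derives_of_mem_rules hr).trans hv⟩
    rw [← hl]
    exact (hp.append (.nonterminal hr hin ho .nil)).append hq

end ContextFreeGrammar

/-- A consequence of the pumping lemma: if the words of a context-free language have infinitely
many lengths, then these lengths contain an infinite arithmetic progression. -/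
theorem Language.IsContextFree.exists_length_progression {T : Type*} {L : Language T}
    (hL : L.IsContextFree) (hinf : {n | ∃ w ∈ L, w.length = n}.Infinite) :
    ∃ a c : ℕ, 0 < c ∧ ∀ k : ℕ, ∃ w ∈ L, w.length = a + k * c := by
  classical
  obtain ⟨g, rfl⟩ := hL
  by_contra! hno
  let F : Finset g.NT := (g.rules.image ContextFreeRule.input).filter fun A =>
    (∃ c, g.Reaches [.nonterminal g.initial] A c) ∧
      ∃ w : List T, g.Derives [.nonterminal A] (w.map .terminal)
  have hF : ∀ A ∈ F, ∀ c, g.Reaches [.nonterminal A] A c → c = 0 := by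
    intro A hA c hc
    obtain ⟨-, ⟨d, hd⟩, w, hw⟩ := Finset.mem_filter.1 hA
    by_contra hc0
    obtain ⟨k, hk⟩ := hno (d + w.length) c (Nat.pos_of_ne_zero hc0)
    obtain ⟨u, v, huv, h⟩ := hd.trans (hc.iterate k)
    refine hk (u ++ w ++ v) ?_ (by simp only [List.length_append]; omega)
    rw [ContextFreeGrammar.mem_language_iff]
    simpa using h.trans ((hw.append_left (u.map .terminal)).append_right (v.map .terminal))
  refine hinf ((ContextFreeGrammar.finite_yields hF [.nonterminal g.initial]).subset ?_)
  rintro _ ⟨w, hw, rfl⟩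
  exact ContextFreeGrammar.yields_of_derives
    (fun r hr h₁ h₂ => Finset.mem_filter.2 ⟨Finset.mem_image_of_mem _ hr, h₁, h₂⟩)
    (ContextFreeGrammar.Derives.refl _) hw

lemma not_forall_add_mul_eq_two_pow {a c : ℕ} (hc : 0 < c) :
    ¬ ∀ k : ℕ, ∃ n : ℕ, a + k * c = 2 ^ n := by
  intro h
  obtain ⟨i, hi⟩ := h (c + 1)
  obtain ⟨j, hj⟩ := h (c + 2)
  have hlt : 2 ^ i < 2 ^ j := by rw [← hi, ← hj]; nlinarith
  have hlt' : 2 ^ j < 2 ^ (i + 1) := by rw [pow_succ, ← hi, ← hj]; nlinarith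
  have := (Nat.pow_lt_pow_iff_right (by norm_num : 1 < 2)).1 hlt
  have := (Nat.pow_lt_pow_iff_right (by norm_num : 1 < 2)).1 hlt'
  omega

theorem not_isContextFree_UPOW : ¬ UPOW.IsContextFree := by
  intro h
  have hinf : {n | ∃ w ∈ UPOW, w.length = n}.Infinite := by
    refine (Set.infinite_range_of_injective (Nat.pow_right_injective le_rfl)).mono ?_
    rintro _ ⟨n, rfl⟩
    exact ⟨List.replicate (2 ^ n) 0, ⟨n, rfl⟩, List.length_replicate⟩
  obtain ⟨a, c, hc, hk⟩ := h.exists_length_progression hinf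
  refine not_forall_add_mul_eq_two_pow (a := a) hc fun k => ?_
  obtain ⟨_, ⟨n, rfl⟩, hw⟩ := hk k
  exact ⟨n, by rw [← hw, List.length_replicate]⟩

namespace GAutomaton

variable {α : Type*} {G : Type*} [Group G] {M : GAutomaton α G}

lemma StepsIn.trans {m n : ℕ} {c d e : M.Q × G × List α} (h₁ : M.StepsIn m c d)
    (h₂ : M.StepsIn n d e) : M.StepsIn (m + n) c e := by
  induction m generalizing c with
  | zero =>
    obtain rfl : c = d := h₁
    simpa using h₂
  | succ m ih =>
    obtain ⟨b, hb, h⟩ := h₁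
    rw [Nat.succ_add]
    exact ⟨b, hb, ih h⟩

lemma Step.stepsIn {c d : M.Q × G × List α} (h : M.Step c d) : M.StepsIn 1 c d :=
  ⟨d, h, rfl⟩

lemma StepsIn.invariant {P : M.Q × G × List α → Prop} (hP : ∀ c d, M.Step c d → P c → P d)
    {n : ℕ} {c d : M.Q × G × List α} (h : M.StepsIn n c d) (hc : P c) : P d := by
  induction n generalizing c with
  | zero =>
    obtain rfl : c = d := h
    exact hc
  | succ n ih =>
    obtain ⟨b, hb, h⟩ := h
    exact ih h (hP c b hb hc)

lemma stepsIn_epsilon_loop {q : M.Q} {x : G} (hq : (q, none, q, x) ∈ M.δ) (n : ℕ) (y : G)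
    (w : List α) : M.StepsIn n (q, y, w) (q, y * x ^ n, w) := by
  induction n generalizing y with
  | zero => simp [StepsIn]
  | succ n ih =>
    refine ⟨(q, y * x, w), ⟨none, x, hq, rfl, rfl⟩, ?_⟩
    simpa [pow_succ', mul_assoc] using ih (y * x)

lemma stepsIn_letter_loop {q : M.Q} {a : α} {x : G} (hq : (q, some a, q, x) ∈ M.δ) (n : ℕ)
    (y : G) : M.StepsIn n (q, y, List.replicate n a) (q, y * x ^ n, []) := by
  induction n generalizing y with
  | zero => simp [StepsIn]
  | succ n ih =>
    refine ⟨(q, y * x, List.replicate n a), ⟨some a, x, hq, rfl, rfl⟩, ?_⟩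
    simpa [pow_succ', mul_assoc] using ih (y * x)

end GAutomaton

/-- The matrix `A` as an element of `G_BS`. -/
noncomputable def GBS.genA : GBS := ⟨BSmatA, Subgroup.subset_closure (by simp)⟩

/-- The matrix `B` as an element of `G_BS`. -/
noncomputable def GBS.genB : GBS := ⟨BSmatB, Subgroup.subset_closure (by simp)⟩

lemma GBS.mul_genA_apply (x : GBS) :
    (x * genA).1 1 0 = x.1 1 0 - x.1 1 1 ∧ (x * genA).1 1 1 = x.1 1 1 := by
  constructor <;>
    simp [genA, BSmatA, Matrix.mul_apply, Fin.sum_univ_two,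
      Matrix.GeneralLinearGroup.mkOfDetNeZero, sub_eq_add_neg]

lemma GBS.mul_genB_apply (x : GBS) :
    (x * genB).1 1 0 = x.1 1 0 / 2 ∧ (x * genB).1 1 1 = x.1 1 1 := by
  constructor <;>
    simp [genB, BSmatB, Matrix.mul_apply, Fin.sum_univ_two,
      Matrix.GeneralLinearGroup.mkOfDetNeZero, div_eq_mul_inv]

lemma GBS.mul_genA_inv_apply (x : GBS) :
    (x * genA⁻¹).1 1 0 = x.1 1 0 + x.1 1 1 ∧ (x * genA⁻¹).1 1 1 = x.1 1 1 := by
  have h := mul_genA_apply (x * genA⁻¹)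
  rw [inv_mul_cancel_right] at h
  exact ⟨by linarith [h.1, h.2], h.2.symm⟩

lemma GBS.mul_genB_inv_apply (x : GBS) :
    (x * genB⁻¹).1 1 0 = x.1 1 0 * 2 ∧ (x * genB⁻¹).1 1 1 = x.1 1 1 := by
  have h := mul_genB_apply (x * genB⁻¹)
  rw [inv_mul_cancel_right] at h
  exact ⟨by linarith [h.1], h.2.symm⟩

lemma GBS.genB_mul_genA : genB * genA = genA ^ 2 * genB := by
  ext i j
  fin_cases i <;> fin_cases j <;>
    norm_num [genA, genB, BSmatA, BSmatB, Matrix.mul_apply, Fin.sum_univ_two, pow_two,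
      Matrix.GeneralLinearGroup.mkOfDetNeZero]

lemma pow_mul_eq_pow_two_pow_mul_pow {G : Type*} [Monoid G] {a b : G} (h : b * a = a ^ 2 * b)
    (n : ℕ) : b ^ n * a = a ^ 2 ^ n * b ^ n := by
  have hb (k : ℕ) : b * a ^ k = a ^ (2 * k) * b := by
    rw [pow_mul]
    exact (SemiconjBy.pow_right (show SemiconjBy b a (a ^ 2) from h) k)
  induction n with
  | zero => simp
  | succ n ih => rw [pow_succ', mul_assoc, ih, ← mul_assoc, hb, mul_assoc, pow_succ' 2 n]

/-- The automaton recognizing `UPOW`: it multiplies its register by `Bⁱ A B⁻ʲ` without reading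
any input, and then by `A⁻¹` for every input letter. -/
noncomputable def upowAutomaton : GAutomaton (Fin 1) GBS where
  Q := Fin 3
  finQ := inferInstance
  q0 := 0
  acc := {2}
  δ := {(0, none, 0, GBS.genB), (0, none, 1, GBS.genA), (1, none, 1, GBS.genB⁻¹),
    (1, none, 2, 1), (2, some 0, 2, GBS.genA⁻¹)}
  finδ := Set.toFinite _

/-- The bottom row of the register, when a word of length `len` is processed. -/
def upowInvariant (len : ℕ) (c : Fin 3 × GBS × List (Fin 1)) : Prop :=
  c.2.1.1 1 1 = 1 ∧
    ((c.1 = 0 ∧ c.2.1.1 1 0 = 0 ∧ c.2.2.length = len) ∨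
      (c.1 = 1 ∧ (∃ j : ℕ, c.2.1.1 1 0 = -2 ^ j) ∧ c.2.2.length = len) ∨
      (c.1 = 2 ∧ ∃ j m : ℕ, c.2.1.1 1 0 = m - 2 ^ j ∧ m + c.2.2.length = len))

lemma upowInvariant_step {len : ℕ} (c d : Fin 3 × GBS × List (Fin 1))
    (h : upowAutomaton.Step c d) (hc : upowInvariant len c) : upowInvariant len d := by
  obtain ⟨p, x, u⟩ := c
  obtain ⟨q, y, v⟩ := d
  obtain ⟨σ, m, hδ, hy, hσ⟩ := h
  simp only at hδ hy hσ
  subst hy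
  obtain ⟨hx, hc⟩ := hc
  simp only at hx hc
  simp only [upowAutomaton] at hδ
  obtain ⟨rfl, rfl, rfl, rfl⟩ | ⟨rfl, rfl, rfl, rfl⟩ | ⟨rfl, rfl, rfl, rfl⟩ |
    ⟨rfl, rfl, rfl, rfl⟩ | ⟨rfl, rfl, rfl, rfl⟩ := hδ <;> simp at hc hσ <;> subst hσ
  · obtain ⟨h₀, h₁⟩ := GBS.mul_genB_apply x
    exact ⟨h₁.trans hx, .inl ⟨rfl, h₀.trans (by simp [hc.1]), hc.2⟩⟩
  · obtain ⟨h₀, h₁⟩ := GBS.mul_genA_apply x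
    exact ⟨h₁.trans hx, .inr (.inl ⟨rfl, ⟨0, h₀.trans (by simp [hc.1, hx])⟩, hc.2⟩)⟩
  · obtain ⟨h₀, h₁⟩ := GBS.mul_genB_inv_apply x
    obtain ⟨⟨j, hj⟩, hlen⟩ := hc
    exact ⟨h₁.trans hx, .inr (.inl ⟨rfl, ⟨j + 1, by rw [h₀, hj]; ring⟩, hlen⟩)⟩
  · obtain ⟨⟨j, hj⟩, hlen⟩ := hc
    rw [mul_one]
    exact ⟨hx, .inr (.inr ⟨rfl, j, 0, by simp [hj], by simpa using hlen⟩)⟩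
  · obtain ⟨h₀, h₁⟩ := GBS.mul_genA_inv_apply x
    obtain ⟨j, m, hj, hlen⟩ := hc
    refine ⟨h₁.trans hx, .inr (.inr ⟨rfl, j, m + 1, ?_, ?_⟩)⟩
    · rw [h₀, hj, hx]
      push_cast
      ring
    · simp at hlen ⊢
      omega

lemma upowAutomaton_lang : upowAutomaton.lang = UPOW := by
  ext w
  constructor
  · rintro ⟨t, k, -, q, hq, hk⟩
    obtain ⟨-, h⟩ := hk.invariant (upowInvariant_step (len := w.length))
      ⟨by simp, .inl ⟨rfl, by simp, rfl⟩⟩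
    obtain rfl : q = (2 : Fin 3) := hq
    obtain ⟨h, -⟩ | ⟨h, -⟩ | ⟨-, j, m, hm, hlen⟩ := h
    · exact absurd h (by decide)
    · exact absurd h (by decide)
    · refine ⟨j, List.eq_replicate_iff.2 ⟨?_, fun _ _ => Subsingleton.elim _ _⟩⟩
      have hm' : (m : ℚ) = 2 ^ j := by
        simpa [sub_eq_zero] using hm.symm
      rw [← hlen]
      simpa using (by exact_mod_cast hm' : m = 2 ^ j)
  · rintro ⟨n, rfl⟩
    let w : List (Fin 1) := List.replicate (2 ^ n) 0
    have h₁ := GAutomaton.stepsIn_epsilon_loop (M := upowAutomaton) (q := (0 : Fin 3))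
      (x := GBS.genB) (.inl rfl) n 1 w
    have h₂ : upowAutomaton.Step ((0 : Fin 3), 1 * GBS.genB ^ n, w)
        ((1 : Fin 3), 1 * GBS.genB ^ n * GBS.genA, w) :=
      ⟨none, GBS.genA, .inr (.inl rfl), rfl, rfl⟩
    have h₃ := GAutomaton.stepsIn_epsilon_loop (M := upowAutomaton) (q := (1 : Fin 3))
      (x := GBS.genB⁻¹) (.inr (.inr (.inl rfl))) n (1 * GBS.genB ^ n * GBS.genA) w
    have h₄ : upowAutomaton.Step
        ((1 : Fin 3), 1 * GBS.genB ^ n * GBS.genA * GBS.genB⁻¹ ^ n, w)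
        ((2 : Fin 3), 1 * GBS.genB ^ n * GBS.genA * GBS.genB⁻¹ ^ n * 1, w) :=
      ⟨none, 1, .inr (.inr (.inr (.inl rfl))), rfl, rfl⟩
    have h₅ := GAutomaton.stepsIn_letter_loop (M := upowAutomaton) (q := (2 : Fin 3))
      (a := 0) (x := GBS.genA⁻¹) (.inr (.inr (.inr (.inr rfl)))) (2 ^ n)
      (1 * GBS.genB ^ n * GBS.genA * GBS.genB⁻¹ ^ n * 1)
    have hone : 1 * GBS.genB ^ n * GBS.genA * GBS.genB⁻¹ ^ n * 1 * GBS.genA⁻¹ ^ 2 ^ n = 1 := by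
      rw [one_mul, pow_mul_eq_pow_two_pow_mul_pow GBS.genB_mul_genA]
      simp
    rw [hone] at h₅
    exact ⟨_, _, le_rfl, (2 : Fin 3), rfl,
      (((h₁.trans h₂.stepsIn).trans h₃).trans h₄.stepsIn).trans h₅⟩

theorem gRecognizable_GBS_UPOW : GRecognizable GBS UPOW :=
  ⟨upowAutomaton, upowAutomaton_lang⟩

/-- `UPOW` is recognized by a `G_BS`-automaton; since `UPOW` is not
context-free, `𝔏(G_BS)` is not contained in the class of context-free languages. -/
theorem GBS_not_subset_CF :
    GRecognizable GBS UPOW ∧ ¬ UPOW.IsContextFree ∧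
    ¬ (∀ (α : Type) [Fintype α] (L : Language α),
        GRecognizable GBS L → L.IsContextFree) := by
  exact ⟨gRecognizable_GBS_UPOW, not_isContextFree_UPOW,
    fun h => not_isContextFree_UPOW (h (Fin 1) UPOW gRecognizable_GBS_UPOW)⟩
end

section
/- Let G be a finitely generated group with finite generating set X. Then for every n ∈ ℕ, U_{W(G,X)}(n) ≥ g_G^X(⌊n/2⌋): there is a uniformly n-dissimilar set for the word problem language W(G,X) of cardinality at least the number of group elements of word length at most ⌊n/2⌋. -/
/-- `S` is a set of pairwise `n`-dissimilar strings for `L`: all members have length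
`≤ n`, and any two distinct members are `n`-dissimilar. -/
def PairwiseDissimilar {α : Type*} (L : Language α) (n : ℕ) (S : Finset (List α)) : Prop :=
  (∀ w ∈ S, w.length ≤ n) ∧
    ∀ w ∈ S, ∀ w' ∈ S, w ≠ w' →
      ∃ v : List α, (w ++ v).length ≤ n ∧ (w' ++ v).length ≤ n ∧
        ((w ++ v) ∈ L ↔ (w' ++ v) ∉ L)

/-- `A_L(n)` : the maximum cardinality of a set of pairwise `n`-dissimilar strings. -/
noncomputable def dissimA {α : Type*} (L : Language α) (n : ℕ) : ℕ :=
  sSup {k | ∃ S : Finset (List α), PairwiseDissimilar L n S ∧ S.card = k}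

/-- `S` is a uniformly `n`-dissimilar set of strings for `L`. -/
def UniformlyDissimilar {α : Type*} (L : Language α) (n : ℕ) (S : Finset (List α)) : Prop :=
  ∀ w ∈ S, ∃ v : List α, (w ++ v).length ≤ n ∧ (w ++ v) ∈ L ∧
    ∀ w' ∈ S, w' ≠ w → (w' ++ v).length ≤ n ∧ (w' ++ v) ∉ L

/-- `U_L(n)` : the maximum cardinality of a uniformly `n`-dissimilar set for `L`. -/
noncomputable def dissimU {α : Type*} (L : Language α) (n : ℕ) : ℕ :=
  sSup {k | ∃ S : Finset (List α), UniformlyDissimilar L n S ∧ S.card = k}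

/-- Evaluation in `G` of a word over the alphabet `X ∪ X⁻¹`, encoded as `↥X × Bool`
(`(x, false)` stands for the generator `x` and `(x, true)` for its inverse `x⁻¹`). -/
def wordEval {G : Type*} [Group G] (X : Finset G) (w : List (↥X × Bool)) : G :=
  (w.map fun p => if p.2 then (p.1 : G)⁻¹ else (p.1 : G)).prod

/-- The word problem language `W(G,X)` over the alphabet `X ∪ X⁻¹`: all words whose
product in `G` is the identity. -/
def wordProblem {G : Type*} [Group G] (X : Finset G) : Language (↥X × Bool) :=
  {w | wordEval X w = 1}

/-- The growth function `g_G^X(n)` of `G` with respect to `X`: the number of group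
elements of word length at most `n`. -/
noncomputable def growthFn {G : Type*} [Group G] (X : Finset G) (n : ℕ) : ℕ :=
  Nat.card {g : G // ∃ w : List (↥X × Bool), w.length ≤ n ∧ wordEval X w = g}

theorem UniformlyDissimilar.length_le {α : Type*} {L : Language α} {n : ℕ}
    {S : Finset (List α)} (hS : UniformlyDissimilar L n S) {w : List α} (hw : w ∈ S) :
    w.length ≤ n := by
  obtain ⟨v, hv, -⟩ := hS w hw
  rw [List.length_append] at hv
  lia

/-- Over a finite alphabet, the cardinality of a uniformly dissimilar set is at most
`dissimU`. -/
theorem UniformlyDissimilar.card_le_dissimU {α : Type*} [Finite α] {L : Language α} {n : ℕ}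
    {S : Finset (List α)} (hS : UniformlyDissimilar L n S) : S.card ≤ dissimU L n := by
  have hfin : {w : List α | w.length ≤ n}.Finite := List.finite_length_le α n
  refine le_csSup ⟨hfin.toFinset.card, ?_⟩ ⟨S, hS, rfl⟩
  rintro k ⟨T, hT, rfl⟩
  exact Finset.card_le_card fun w hw => hfin.mem_toFinset.2 (hT.length_le hw)

theorem wordEval_append {G : Type*} [Group G] (X : Finset G) (u v : List (↥X × Bool)) :
    wordEval X (u ++ v) = wordEval X u * wordEval X v := by
  simp [wordEval]

/-- The formal inverse of a word has the same length and evaluates to the inverse. -/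
theorem exists_wordEval_eq_inv {G : Type*} [Group G] (X : Finset G) (w : List (↥X × Bool)) :
    ∃ v : List (↥X × Bool), v.length = w.length ∧ wordEval X v = (wordEval X w)⁻¹ := by
  refine ⟨(w.map fun p => (p.1, !p.2)).reverse, by simp, ?_⟩
  rw [wordEval, wordEval, List.prod_inv_reverse, List.map_reverse, List.map_map, List.map_map]
  congr 3
  funext p
  obtain ⟨x, b⟩ := p
  cases b <;> simp

/-- Words of length at most `n / 2` with distinct values in `G` form a uniformly
`n`-dissimilar set for the word problem. -/
theorem uniformlyDissimilar_wordProblem {G : Type*} [Group G] (X : Finset G) (n : ℕ)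
    (S : Finset (List (↥X × Bool))) (hlen : ∀ w ∈ S, w.length ≤ n / 2)
    (hinj : Set.InjOn (wordEval X) S) : UniformlyDissimilar (wordProblem X) n S := by
  intro w hw
  obtain ⟨v, hv, hvw⟩ := exists_wordEval_eq_inv X w
  have hwl := hlen w hw
  refine ⟨v, ?_, ?_, fun w' hw' hne => ⟨?_, fun hmem => hne (hinj hw' hw ?_)⟩⟩
  · rw [List.length_append]
    lia
  · change wordEval X (w ++ v) = 1
    rw [wordEval_append, hvw, mul_inv_cancel]
  · have hwl' := hlen w' hw'
    rw [List.length_append]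
    lia
  · change wordEval X (w' ++ v) = 1 at hmem
    rwa [wordEval_append, hvw, mul_inv_eq_one] at hmem

/-- For a finitely generated group `G` with finite generating set `X`,
`U_{W(G,X)}(n) ≥ g_G^X(⌊n/2⌋)` for every `n`. -/
theorem dissimU_wordProblem_ge_growth {G : Type*} [Group G] (X : Finset G)
    (hX : Subgroup.closure (X : Set G) = ⊤) (n : ℕ) :
    growthFn X (n / 2) ≤ dissimU (wordProblem X) n := by
  let B := {g : G // ∃ w : List (↥X × Bool), w.length ≤ n / 2 ∧ wordEval X w = g}
  choose f hlen heval using fun g : B => g.2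
  have hf : Function.Injective f := fun g h hgh =>
    Subtype.ext (by rw [← heval g, ← heval h, hgh])
  have hfin : (Set.range f).Finite :=
    (List.finite_length_le (↥X × Bool) (n / 2)).subset (by rintro _ ⟨g, rfl⟩; exact hlen g)
  have hcard : growthFn X (n / 2) = hfin.toFinset.card := by
    rw [← Set.ncard_eq_toFinset_card _ hfin, ← Nat.card_coe_set_eq,
      Nat.card_range_of_injective hf]
    rfl
  rw [hcard]
  refine (uniformlyDissimilar_wordProblem X n _ ?_ ?_).card_le_dissimU
  · intro w hw
    obtain ⟨g, rfl⟩ := hfin.mem_toFinset.1 hw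
    exact hlen g
  · intro w hw w' hw' h
    obtain ⟨g, rfl⟩ := hfin.mem_toFinset.1 hw
    obtain ⟨g', rfl⟩ := hfin.mem_toFinset.1 hw'
    rw [heval, heval] at h
    rw [Subtype.ext h]
end

section
/- Suppose G is a finitely generated group and H is a subgroup of finite index in G. Then 𝔏(G)^w_{O(n)} = 𝔏(H)^w_{O(n)}: a language is recognized by a weakly linear-time bounded G-automaton if and only if it is recognized by a weakly linear-time bounded H-automaton. -/
namespace GAutomaton

variable {α : Type*} {G : Type*} [Group G] {K : Type*} [Group K]

/-- A map of configurations that preserves and reflects steps, and whose range is closed under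
steps, preserves and reflects computations of a given length. -/
theorem stepsIn_iff_of_step_iff {M : GAutomaton α K} {N : GAutomaton α G}
    {F : M.Q × K × List α → N.Q × G × List α}
    (hstep : ∀ c d, M.Step c d ↔ N.Step (F c) (F d))
    (hrange : ∀ c e, N.Step (F c) e → ∃ d, F d = e) (hF : F.Injective)
    (k : ℕ) (c d : M.Q × K × List α) :
    M.StepsIn k c d ↔ N.StepsIn k (F c) (F d) := by
  induction k generalizing c with
  | zero => exact hF.eq_iff.symm
  | succ k ih =>
    constructor
    · rintro ⟨e, hce, hed⟩
      exact ⟨F e, (hstep _ _).1 hce, (ih e).1 hed⟩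
    · rintro ⟨e, hce, hed⟩
      obtain ⟨e, rfl⟩ := hrange _ _ hce
      exact ⟨e, (hstep _ _).2 hce, (ih e).2 hed⟩

/-- The automaton obtained by applying a group homomorphism to all register instructions. -/
def map (f : K →* G) (M : GAutomaton α K) : GAutomaton α G where
  Q := M.Q
  finQ := M.finQ
  q0 := M.q0
  acc := M.acc
  δ := (fun t => (t.1, t.2.1, t.2.2.1, f t.2.2.2)) '' M.δ
  finδ := M.finδ.image _

theorem step_map_iff (f : K →* G) (M : GAutomaton α K) (q : M.Q) (x : K) (u : List α)
    (e : M.Q × G × List α) :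
    (M.map f).Step (q, f x, u) e ↔
      ∃ d : M.Q × K × List α, (d.1, f d.2.1, d.2.2) = e ∧ M.Step (q, x, u) d := by
  obtain ⟨q', y, v⟩ := e
  constructor
  · rintro ⟨σ, m, ⟨⟨p, τ, p', k⟩, hk, heq⟩, hy, hu⟩
    obtain ⟨rfl, rfl, rfl, rfl⟩ := heq
    refine ⟨(q', x * k, v), ?_, _, k, hk, rfl, hu⟩
    simp only at hy
    simp [hy]
  · rintro ⟨⟨q', y, v⟩, heq, σ, m, hm, hy, hu⟩
    simp only [Prod.mk.injEq] at heq
    obtain ⟨rfl, rfl, rfl⟩ := heq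
    refine ⟨σ, f m, ⟨_, hm, rfl⟩, ?_, hu⟩
    simp only at hy ⊢
    rw [hy, map_mul]

theorem acceptsIn_map_iff {f : K →* G} (hf : Function.Injective f) (M : GAutomaton α K)
    (w : List α) (t : ℕ) : (M.map f).AcceptsIn w t ↔ M.AcceptsIn w t := by
  let F : M.Q × K × List α → (M.map f).Q × G × List α := fun c => (c.1, f c.2.1, c.2.2)
  have hF : F.Injective := by
    rintro ⟨q, x, u⟩ ⟨q', x', u'⟩ h
    obtain ⟨rfl, h⟩ := Prod.mk.inj h
    obtain ⟨hx, rfl⟩ := Prod.mk.inj h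
    obtain rfl : x = x' := hf hx
    rfl
  have key := stepsIn_iff_of_step_iff (M := M) (N := M.map f) (F := F)
    (fun c d => ⟨fun h => (step_map_iff f M _ _ _ _).2 ⟨d, rfl, h⟩, fun h => by
      obtain ⟨d', hd', h⟩ := (step_map_iff f M _ _ _ _).1 h
      exact hF hd' ▸ h⟩)
    (fun c e h => by
      obtain ⟨d, hd, -⟩ := (step_map_iff f M _ _ _ _).1 h
      exact ⟨d, hd⟩) hF
  refine exists_congr fun k => and_congr_right fun _ => exists_congr fun q =>
    and_congr_right fun _ => ?_
  have h := key k (M.q0, 1, w) (q, 1, [])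
  simp only [F, map_one] at h
  exact h.symm

/-- The automaton over a subgroup `H` simulating an automaton over `G`: the register element
`h * r i`, with `h ∈ H`, is represented by the register `h` and the coset index `i`, which is
part of the state. -/
def restrict {H : Subgroup G} {ι : Type} [Finite ι] (r : ι → G) (i₀ : ι) (M : GAutomaton α G) :
    GAutomaton α H where
  Q := M.Q × ι
  finQ := have := M.finQ; inferInstance
  q0 := (M.q0, i₀)
  acc := {p | p.1 ∈ M.acc ∧ p.2 = i₀}
  δ := {t | (t.1.1, t.2.1, t.2.2.1.1, (r t.1.2)⁻¹ * t.2.2.2 * r t.2.2.1.2) ∈ M.δ}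
  finδ := by
    refine ((M.finδ.prod (Set.finite_univ (α := ι × ι))).preimage
      (f := fun t : (M.Q × ι) × Option α × (M.Q × ι) × H =>
        ((t.1.1, t.2.1, t.2.2.1.1, (r t.1.2)⁻¹ * t.2.2.2 * r t.2.2.1.2), t.1.2, t.2.2.1.2))
      (Function.Injective.injOn ?_)).subset fun t ht => ⟨ht, trivial⟩
    rintro ⟨⟨q, i⟩, σ, ⟨q', j⟩, h⟩ ⟨⟨p, i'⟩, τ, ⟨p', j'⟩, h'⟩ heq
    simp only [Prod.mk.injEq] at heq
    obtain ⟨⟨rfl, rfl, rfl, hm⟩, rfl, rfl⟩ := heq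
    simpa using hm

theorem acceptsIn_restrict_iff {H : Subgroup G} {ι : Type} [Finite ι] {r : ι → G} {i₀ : ι}
    (hr : Function.Bijective fun p : H × ι => (p.1 : G) * r p.2) (hi₀ : r i₀ = 1)
    (M : GAutomaton α G) (w : List α) (t : ℕ) :
    (M.restrict (H := H) r i₀).AcceptsIn w t ↔ M.AcceptsIn w t := by
  let F : (M.restrict (H := H) r i₀).Q × H × List α → M.Q × G × List α :=
    fun c => (c.1.1, c.2.1 * r c.1.2, c.2.2)
  have hF : F.Injective := by
    rintro ⟨⟨q, i⟩, x, u⟩ ⟨⟨q', i'⟩, x', u'⟩ h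
    simp only [F, Prod.mk.injEq] at h
    obtain ⟨rfl, hx, rfl⟩ := h
    obtain ⟨rfl, rfl⟩ := Prod.mk.inj (hr.1 (a₁ := (x, i)) (a₂ := (x', i')) hx)
    rfl
  have hstep : ∀ c d, (M.restrict (H := H) r i₀).Step c d ↔ M.Step (F c) (F d) := by
    rintro ⟨⟨q, i⟩, x, u⟩ ⟨⟨q', j⟩, y, v⟩
    constructor
    · rintro ⟨σ, m, hm, hy, hu⟩
      refine ⟨σ, _, hm, ?_, hu⟩
      simp only at hy
      simp [F, hy, mul_assoc]
    · rintro ⟨σ, m, hm, hy, hu⟩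
      refine ⟨σ, x⁻¹ * y, ?_, by simp, hu⟩
      simp only [F] at hm hy
      have : m = (r i)⁻¹ * ((x⁻¹ * y : H) : G) * r j := by
        rw [Subgroup.coe_mul, mul_assoc, mul_assoc, hy]
        simp [mul_assoc]
      rw [this] at hm
      exact hm
  have hrange : ∀ e, ∃ d, F d = e := by
    rintro ⟨q, x, u⟩
    obtain ⟨⟨h, i⟩, rfl⟩ := hr.2 x
    exact ⟨((q, i), h, u), rfl⟩
  have key (k : ℕ) (q : M.Q) := stepsIn_iff_of_step_iff hstep (fun _ e _ => hrange e) hF k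
    ((M.q0, i₀), 1, w) ((q, i₀), 1, [])
  simp only [F, hi₀, OneMemClass.coe_one, mul_one] at key
  refine exists_congr fun k => and_congr_right fun _ => ⟨?_, ?_⟩
  · rintro ⟨⟨q, _⟩, ⟨hq, rfl⟩, h⟩
    exact ⟨q, hq, (key k q).1 h⟩
  · rintro ⟨q, hq, h⟩
    exact ⟨(q, i₀), ⟨hq, rfl⟩, (key k q).2 h⟩

end GAutomaton

/-- Linear-time recognizability transfers along a simulation preserving acceptance times. -/
theorem GRecognizableLinTime.of_acceptsIn_iff {α G K : Type*} [Group G] [Group K]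
    {L : Language α} (hL : GRecognizableLinTime G L)
    (h : ∀ M : GAutomaton α G, ∃ N : GAutomaton α K,
      ∀ w t, N.AcceptsIn w t ↔ M.AcceptsIn w t) : GRecognizableLinTime K L := by
  obtain ⟨C, M, rfl, hM⟩ := hL
  obtain ⟨N, hN⟩ := h M
  exact ⟨C, N, Set.ext fun w => exists_congr (hN w), fun w hw => (hN w _).2 (hM w hw)⟩

/-- Representatives of the right cosets of a subgroup of finite index, indexed by `Fin n`. -/
theorem Subgroup.exists_fin_right_transversal {G : Type*} [Group G] (H : Subgroup G)
    [H.FiniteIndex] : ∃ (n : ℕ) (r : Fin n → G) (i₀ : Fin n), r i₀ = 1 ∧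
      Function.Bijective fun p : H × Fin n => (p.1 : G) * r p.2 := by
  obtain ⟨S, hS, h1⟩ := H.exists_isComplement_right 1
  have : Finite S := hS.finite_right
  obtain ⟨n, ⟨e⟩⟩ := Finite.exists_equiv_fin S
  refine ⟨n, fun i => e.symm i, e ⟨1, h1⟩, by simp, ?_⟩
  exact Function.Bijective.comp hS ((Equiv.refl H).prodCongr e.symm).bijective

/-- If `G` is finitely generated and `H` is a subgroup of finite index
in `G`, then `𝔏(G)ʷ_{O(n)} = 𝔏(H)ʷ_{O(n)}`. -/
theorem lintime_finiteIndex_subgroup {G : Type*} [Group G] (hfg : Group.FG G)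
    (H : Subgroup G) (hfi : H.FiniteIndex) {α : Type} [Fintype α] (L : Language α) :
    GRecognizableLinTime G L ↔ GRecognizableLinTime H L := by
  obtain ⟨n, r, i₀, hi₀, hr⟩ := H.exists_fin_right_transversal
  exact ⟨fun hL => hL.of_acceptsIn_iff fun M =>
      ⟨M.restrict r i₀, GAutomaton.acceptsIn_restrict_iff hr hi₀ M⟩,
    fun hL => hL.of_acceptsIn_iff fun M =>
      ⟨M.map H.subtype, GAutomaton.acceptsIn_map_iff H.subtype_injective M⟩⟩
end
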